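/- Let C be a class of binary classifiers on a countable domain X with VC dimension d ≥ 2, let n ≥ 1, T ≥ 1, δ ∈ (0,1], let h ∈ C, let μ be a probability distribution on X × {0,1}, and set ε := (16/n)·(dT·ln(2n) + ln(8/δ)). Then with probability at least 1 − δ over (x,y) ∼ μ^n, for every c = (c_1,…,c_T) ∈ C^T it holds that err_μ(h|_{S(h,c)}) ≤ max{ 2·err(h|_{S(h,c)}(x), y), ε }. -/

import Mathlib

open MeasureTheory

/-- A finite set `A` is shattered by `C` if every boolean labeling of `A` is
realized by some member of `C`. -/
def Shatters {X : Type*} (C : Set (X → Bool)) (A : Finset X) : Prop :=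
  ∀ b : X → Bool, ∃ g ∈ C, ∀ a ∈ A, g a = b a

/-- `C` has VC dimension `d`: some set of size `d` is shattered and no larger set is. -/
def VCDim {X : Type*} (C : Set (X → Bool)) (d : ℕ) : Prop :=
  (∃ A : Finset X, A.card = d ∧ Shatters C A) ∧ ∀ A : Finset X, Shatters C A → A.card ≤ d

lemma sauer_num (m d : ℕ) (hm : 2 ≤ m) (hd : 2 ≤ d) :
    ∑ i ∈ Finset.Iic d, m.choose i ≤ m ^ d := by
  have e : ∀ d, Finset.Iic d = Finset.range (d+1) := by
    intro d; ext; simp [Nat.lt_succ_iff]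
  rw [e]
  induction d, hd using Nat.le_induction with
  | base =>
    simp only [Finset.sum_range_succ, Finset.sum_range_zero, Nat.choose_zero_right, Nat.choose_one_right]
    rw [Nat.choose_two_right]
    obtain ⟨k, rfl⟩ := Nat.exists_eq_add_of_le hm
    have : (2 + k) * (2 + k - 1) / 2 ≤ ((2 + k) * (1 + k)) / 2 := by
      have : 2 + k - 1 = 1 + k := by omega
      rw [this]
    have h2 : (2 + k) * (1 + k) / 2 * 2 ≤ (2 + k) * (1 + k) := Nat.div_mul_le_self _ _
    nlinarith
  | succ d hd ih =>
    rw [Finset.sum_range_succ]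
    have h1 : m.choose (d+1) * 2 ≤ m ^ (d+1) := by
      have h2 := Nat.choose_le_pow_div (α := ℚ) (d+1) m
      have h3 : (2:ℚ) ≤ ((d+1).factorial : ℚ) := by
        have : 2 ≤ (d+1).factorial := by
          calc 2 ≤ d + 1 := by omega
            _ ≤ _ := Nat.self_le_factorial _
        exact_mod_cast this
      rw [le_div_iff₀ (by linarith)] at h2
      have : ((m.choose (d+1) : ℚ)) * 2 ≤ (m:ℚ) ^ (d+1) := by
        refine le_trans ?_ h2
        gcongr
      exact_mod_cast this
    have h4 : m ^ d * 2 ≤ m ^ (d+1) := by rw [pow_succ]; gcongr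
    have := ih
    omega

lemma traces {X : Type*} (C : Set (X → Bool)) (d : ℕ) (hd : 2 ≤ d) (hC : VCDim C d)
    (m : ℕ) (hm : 2 ≤ m) (P : Finset X) (hP : P.card ≤ m) :
    ∃ S : Finset (X → Bool), S.card ≤ m ^ d ∧ (∀ c ∈ S, c ∈ C) ∧
      ∀ c ∈ C, ∃ c' ∈ S, ∀ x ∈ P, c' x = c x := by
  classical
  let tr : (X → Bool) → Finset P := fun c => Finset.univ.filter (fun x => c x = true)
  let A : Finset (Finset P) := Finset.univ.filter (fun s => ∃ c ∈ C, tr c = s)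
  have hA : ∀ s ∈ A, ∃ c ∈ C, tr c = s := by
    intro s hs; simpa [A] using hs
  choose! f hf hf' using hA
  refine ⟨A.image f, ?_, ?_, ?_⟩
  · refine Finset.card_image_le.trans ?_
    have hv : A.vcDim ≤ d := by
      unfold Finset.vcDim
      refine Finset.sup_le fun s hs => ?_
      rw [Finset.mem_shatterer] at hs
      have := hC.2 (s.map (Function.Embedding.subtype _)) ?_
      · simpa using this
      · intro b
        obtain ⟨u, hu, hsu⟩ := hs (t := s.filter (fun x => b x = true)) (Finset.filter_subset _ _)
        refine ⟨f u, hf u hu, ?_⟩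
        intro a ha
        simp only [Finset.mem_map, Function.Embedding.subtype_apply] at ha
        obtain ⟨x, hx, rfl⟩ := ha
        have h1 := congrArg (fun q => x ∈ q) hsu
        rw [← hf' u hu] at h1
        simp [tr, hx] at h1
        cases h2 : f u x <;> cases h3 : b x <;> simp_all
    calc A.card ≤ A.shatterer.card := Finset.card_le_card_shatterer A
      _ ≤ ∑ k ∈ Finset.Iic A.vcDim, (Fintype.card P).choose k := Finset.card_shatterer_le_sum_vcDim
      _ ≤ ∑ k ∈ Finset.Iic d, (Fintype.card P).choose k := by
        apply Finset.sum_le_sum_of_subset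
        exact Finset.Iic_subset_Iic.2 hv
      _ ≤ ∑ k ∈ Finset.Iic d, m.choose k := by
        apply Finset.sum_le_sum
        intro i _
        apply Nat.choose_le_choose
        simpa using hP
      _ ≤ m ^ d := sauer_num m d hm hd
  · intro c hc
    obtain ⟨s, hs, rfl⟩ := Finset.mem_image.1 hc
    exact hf s hs
  · intro c hc
    have hm : tr c ∈ A := by simp only [A, Finset.mem_filter, Finset.mem_univ, true_and]; exact ⟨c, hc, rfl⟩
    refine ⟨f (tr c), Finset.mem_image_of_mem _ hm, ?_⟩
    intro x hx
    have h1 := congrArg (fun q => (⟨x, hx⟩ : P) ∈ q) (hf' _ hm)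
    simp [tr] at h1
    cases h2 : f (tr c) x <;> cases h3 : c x <;> simp_all [tr]

section core
variable {Z : Type*} {ι : Type*}

open Classical in
/-- weight: `a` on `F`, `1` outside. -/
noncomputable def wt (F : Set Z) (a : ℝ) (z : Z) : ℝ := if z ∈ F then a else 1

/-- swap of coordinates according to a sign pattern. -/
def swp {n : ℕ} (s : Fin n → Bool) (p : (Fin n → Z) × (Fin n → Z)) :
    (Fin n → Z) × (Fin n → Z) :=
  (fun i => if s i then p.2 i else p.1 i, fun i => if s i then p.1 i else p.2 i)

/-- exponential-type statistic of a double sample. -/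
noncomputable def stat {n : ℕ} (F : Set Z) (p : (Fin n → Z) × (Fin n → Z)) : ℝ :=
  ∏ i, (wt F (4/3) (p.2 i) * wt F (2/3) (p.1 i))

lemma wt_nonneg (F : Set Z) (a : ℝ) (ha : 0 ≤ a) (z : Z) : 0 ≤ wt F a z := by
  unfold wt; split_ifs <;> simp [ha]

lemma stat_nonneg {n : ℕ} (F : Set Z) (p : (Fin n → Z) × (Fin n → Z)) : 0 ≤ stat F p := by
  unfold stat
  exact Finset.prod_nonneg fun i _ => mul_nonneg (wt_nonneg _ _ (by norm_num) _)
    (wt_nonneg _ _ (by norm_num) _)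

lemma sum_stat_swp {n : ℕ} (F : Set Z) (p : (Fin n → Z) × (Fin n → Z)) :
    ∑ s : Fin n → Bool, stat F (swp s p) ≤ 2 ^ n := by
  have h1 := Finset.prod_univ_sum (fun _ : Fin n => (Finset.univ : Finset Bool))
    (fun i b => wt F (4/3) (if b then p.1 i else p.2 i) * wt F (2/3) (if b then p.2 i else p.1 i))
  rw [Fintype.piFinset_univ] at h1
  unfold stat swp
  simp only
  rw [← h1]
  calc _ ≤ ∏ i : Fin n, (2:ℝ) := by
        apply Finset.prod_le_prod
        · intro i _
          exact Finset.sum_nonneg fun b _ => mul_nonneg (wt_nonneg _ _ (by norm_num) _)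
            (wt_nonneg _ _ (by norm_num) _)
        · intro i _
          simp only [Fintype.sum_bool, wt]
          simp
          split_ifs <;> norm_num
    _ = _ := by simp

lemma swp_mp [MeasurableSpace Z] (μ : Measure Z) [IsProbabilityMeasure μ] {n : ℕ}
    (s : Fin n → Bool) :
    MeasurePreserving (swp (Z := Z) s)
      ((Measure.pi fun _ : Fin n => μ).prod (Measure.pi fun _ : Fin n => μ))
      ((Measure.pi fun _ : Fin n => μ).prod (Measure.pi fun _ : Fin n => μ)) := by
  have h1 := measurePreserving_arrowProdEquivProdArrow Z Z (Fin n) (fun _ => μ) (fun _ => μ)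
  have h2 := measurePreserving_pi (fun _ : Fin n => μ.prod μ) (fun _ : Fin n => μ.prod μ)
    (f := fun i => if s i then Prod.swap else id) (by
      intro i
      split_ifs
      · exact Measure.measurePreserving_swap
      · exact MeasurePreserving.id _)
  have h3 := (h1.comp h2).comp (h1.symm _)
  convert h3 using 1
  funext p
  apply Prod.ext
  · funext i
    simp only [swp, Function.comp, MeasurableEquiv.arrowProdEquivProdArrow,
      Equiv.arrowProdEquivProdArrow]
    cases hs : s i <;> simp [hs]
  · funext i
    simp only [swp, Function.comp, MeasurableEquiv.arrowProdEquivProdArrow,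
      Equiv.arrowProdEquivProdArrow]
    cases hs : s i <;> simp [hs]

lemma ghost [Countable Z] [MeasurableSpace Z] [MeasurableSingletonClass Z]
    (μ : Measure Z) [IsProbabilityMeasure μ] (n : ℕ) (F : Set Z) (ω : Fin n → Z) :
    ∫⁻ ω', ENNReal.ofReal (stat F (ω, ω')) ∂(Measure.pi fun _ : Fin n => μ) =
      ENNReal.ofReal ((1 + (μ F).toReal / 3) ^ n * (2/3) ^ (Set.ncard {i | ω i ∈ F})) := by
  classical
  have hint : Integrable (wt F (4/3)) μ := by
    refine Integrable.of_bound (C := 4/3) (measurable_of_countable _).aestronglyMeasurable ?_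
    refine ae_of_all _ fun z => ?_
    unfold wt; split_ifs <;> norm_num
  have hw : ∫ z, wt F (4/3) z ∂μ = 1 + (μ F).toReal / 3 := by
    have : wt F (4/3) = fun z => 1 + F.indicator (fun _ => (1/3:ℝ)) z := by
      funext z; unfold wt; by_cases hz : z ∈ F <;> simp [hz]; norm_num
    have hF : MeasurableSet F := (Set.to_countable F).measurableSet
    rw [this, integral_add (integrable_const _) ((integrable_const _).indicator hF),
      integral_indicator_const _ hF]
    simp [Measure.real]; ring
  have hk : ∏ i, wt F (2/3) (ω i) = (2/3) ^ (Set.ncard {i | ω i ∈ F}) := by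
    unfold wt
    rw [Finset.prod_ite]
    simp only [Finset.prod_const, Finset.prod_const_one, mul_one]
    congr 1
    rw [← Set.ncard_coe_finset]; simp
  rw [← ofReal_integral_eq_lintegral_ofReal]
  · congr 1
    unfold stat
    simp only [Finset.prod_mul_distrib]
    rw [integral_mul_const, integral_fintype_prod_eq_pow (ι := Fin n) (wt F (4/3)), hw, hk]
    simp
  · unfold stat
    simp only [Finset.prod_mul_distrib]
    exact (Integrable.fintype_prod (fun _ => hint)).mul_const _
  · exact ae_of_all _ fun z => stat_nonneg _ _

lemma core [Countable Z] [MeasurableSpace Z] [MeasurableSingletonClass Z]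
    (μ : Measure Z) [IsProbabilityMeasure μ] (n K : ℕ) (F : ι → Set Z)
    (hK : ∀ P : Finset Z, P.card ≤ 2 * n → ∃ S : Finset ι, S.card ≤ K ∧
      ∀ c, ∃ c' ∈ S, ∀ z ∈ P, (z ∈ F c' ↔ z ∈ F c)) (L : ℝ) :
    ENNReal.ofReal L * (Measure.pi fun _ : Fin n => μ)
      {ω | ∃ c, L ≤ (1 + (μ (F c)).toReal / 3) ^ n * (2/3) ^ (Set.ncard {i | ω i ∈ F c})}
      ≤ K := by
  classical
  let ν := Measure.pi fun _ : Fin n => μ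
  let G : (Fin n → Z) × (Fin n → Z) → ENNReal := fun p => ⨆ c, ENNReal.ofReal (stat (F c) p)
  have hG : Measurable G := measurable_of_countable _
  have hpt : ∀ p, ∑ s : Fin n → Bool, G (swp s p) ≤ (K : ENNReal) * 2 ^ n := by
    intro p
    let P : Finset Z := Finset.univ.image p.1 ∪ Finset.univ.image p.2
    have hP : P.card ≤ 2 * n := by
      refine (Finset.card_union_le _ _).trans ?_
      have h1 : (Finset.univ.image p.1).card ≤ n := by
        simpa using (Finset.card_image_le (s := Finset.univ) (f := p.1))
      have h2 : (Finset.univ.image p.2).card ≤ n := by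
        simpa using (Finset.card_image_le (s := Finset.univ) (f := p.2))
      omega
    obtain ⟨S, hS, hS'⟩ := hK P hP
    have hst : ∀ c c', (∀ z ∈ P, (z ∈ F c' ↔ z ∈ F c)) → ∀ s,
        stat (F c) (swp s p) = stat (F c') (swp s p) := by
      intro c c' hcc s
      have m1 : ∀ i, p.1 i ∈ P := fun i => by simp [P]
      have m2 : ∀ i, p.2 i ∈ P := fun i => by simp [P]
      unfold stat swp wt
      refine Finset.prod_congr rfl fun i _ => ?_
      cases hs : s i <;> simp [hs, hcc _ (m1 i), hcc _ (m2 i)]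
    have hle : ∀ s, G (swp s p) ≤ ∑ c ∈ S, ENNReal.ofReal (stat (F c) (swp s p)) := by
      intro s
      refine iSup_le fun c => ?_
      obtain ⟨c', hc', hcc⟩ := hS' c
      rw [hst c c' hcc s]
      exact Finset.single_le_sum (f := fun c => ENNReal.ofReal (stat (F c) (swp s p)))
        (fun _ _ => bot_le) hc'
    calc ∑ s : Fin n → Bool, G (swp s p)
        ≤ ∑ s : Fin n → Bool, ∑ c ∈ S, ENNReal.ofReal (stat (F c) (swp s p)) :=
          Finset.sum_le_sum fun s _ => hle s
      _ = ∑ c ∈ S, ∑ s : Fin n → Bool, ENNReal.ofReal (stat (F c) (swp s p)) := Finset.sum_comm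
      _ ≤ ∑ c ∈ S, (2:ENNReal) ^ n := by
          refine Finset.sum_le_sum fun c _ => ?_
          rw [← ENNReal.ofReal_sum_of_nonneg (fun _ _ => stat_nonneg _ _)]
          refine (ENNReal.ofReal_le_ofReal (sum_stat_swp _ _)).trans ?_
          rw [ENNReal.ofReal_pow (by norm_num)]; simp
      _ = (S.card : ENNReal) * 2 ^ n := by simp
      _ ≤ _ := by gcongr
  have hint : ∫⁻ p, G p ∂(ν.prod ν) ≤ K := by
    have h1 : ∑ s : Fin n → Bool, ∫⁻ p, G (swp s p) ∂(ν.prod ν) ≤ (K : ENNReal) * 2 ^ n := by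
      rw [← lintegral_finsetSum]
      · calc _ ≤ ∫⁻ p, (K : ENNReal) * 2 ^ n ∂(ν.prod ν) := lintegral_mono hpt
          _ = _ := by simp
      · intro s _; exact measurable_of_countable _
    have h2 : ∀ s : Fin n → Bool, ∫⁻ p, G (swp s p) ∂(ν.prod ν) = ∫⁻ p, G p ∂(ν.prod ν) :=
      fun s => (swp_mp μ s).lintegral_comp hG
    simp only [h2, Finset.sum_const, Finset.card_univ, Fintype.card_fun, Fintype.card_bool,
      Fintype.card_fin, nsmul_eq_mul, Nat.cast_pow, Nat.cast_ofNat] at h1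
    rw [mul_comm] at h1
    exact (ENNReal.mul_le_mul_iff_left (by simp) (by simp)).1 h1
  rw [lintegral_prod _ hG.aemeasurable] at hint
  refine le_trans ?_ hint
  refine le_trans ?_ (mul_meas_ge_le_lintegral (measurable_of_countable _) (ENNReal.ofReal L))
  gcongr with ω
  rintro ⟨c, hc⟩
  calc ENNReal.ofReal L ≤ _ := ENNReal.ofReal_le_ofReal hc
    _ = _ := (ghost μ n (F c) ω).symm
    _ ≤ _ := lintegral_mono fun ω' => le_iSup (fun c => ENNReal.ofReal (stat (F c) (ω, ω'))) c

end core

lemma numeric (n k : ℕ) (p ε : ℝ) (hp0 : 0 ≤ p) (hp1 : p ≤ 1) (hp : ε < p)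
    (hk : 2 * ((k : ℝ) / n) < p) (hn : 1 ≤ n) :
    Real.exp (n * ε / 16) ≤ (1 + p / 3) ^ n * (2/3) ^ k := by
  have hn' : (0:ℝ) < n := by exact_mod_cast hn
  have hk' : (k:ℝ) ≤ n * p / 2 := by
    have : 2 * ((k : ℝ) / n) = (2 * k) / n := by ring
    rw [this, div_lt_iff₀ hn'] at hk
    linarith
  have h1 : ((4:ℝ)/3) ^ p ≤ 1 + p / 3 := by
    have := rpow_one_add_le_one_add_mul_self (s := 1/3) (by norm_num) hp0 hp1
    norm_num at this ⊢
    linarith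
  have h2 : ((2:ℝ)/3) ^ ((n:ℝ) * p / 2) ≤ (2/3) ^ k := by
    rw [← Real.rpow_natCast]
    exact Real.rpow_le_rpow_of_exponent_ge (by norm_num) (by norm_num) hk'
  have hl : (1:ℝ)/8 ≤ 2 * Real.log (4/3) + Real.log (2/3) := by
    have e : 2 * Real.log (4/3) + Real.log (2/3) = Real.log (32/27) := by
      rw [← Real.log_rpow (by norm_num), ← Real.log_mul (by norm_num) (by norm_num)]
      norm_num
    rw [e]
    have := Real.one_sub_inv_le_log_of_pos (x := 32/27) (by norm_num)
    norm_num at this ⊢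
    linarith
  calc Real.exp (n * ε / 16) ≤ Real.exp (n * p / 16) := by gcongr
    _ ≤ Real.exp (Real.log (4/3) * (p * n) + Real.log (2/3) * (n * p / 2)) := by
      apply Real.exp_le_exp.2
      have : 0 ≤ (n:ℝ) * p := by positivity
      nlinarith
    _ = ((4:ℝ)/3) ^ (p * n) * (2/3) ^ ((n:ℝ) * p / 2) := by
      rw [Real.exp_add, Real.rpow_def_of_pos (by norm_num), Real.rpow_def_of_pos (by norm_num)]
    _ = (((4:ℝ)/3) ^ p) ^ n * (2/3) ^ ((n:ℝ) * p / 2) := by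
      rw [Real.rpow_mul (by norm_num), Real.rpow_natCast]
    _ ≤ _ := by gcongr

/-- for a class `C` of VC dimension `d ≥ 2`, `n ≥ 1`, `T ≥ 1`,
`δ ∈ (0,1]`, `h ∈ C`, distribution `μ` on `X × {0,1}`, and
`ε = (16/n)(dT·ln(2n) + ln(8/δ))`: with probability at least `1 − δ` over
`(x,y) ∼ μⁿ`, every `c ∈ C^T` satisfies
`err_μ(h|_{S(h,c)}) ≤ max{2·err(h|_{S(h,c)}(x), y), ε}`. -/
theorem stmt11 {X : Type*} [Countable X] [MeasurableSpace X] [MeasurableSingletonClass X]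
    (C : Set (X → Bool)) (d : ℕ) (hd : 2 ≤ d) (hC : VCDim C d)
    (n T : ℕ) (hn : 1 ≤ n) (hT : 1 ≤ T)
    (δ : ℝ) (hδ0 : 0 < δ) (hδ1 : δ ≤ 1)
    (h : X → Bool) (hh : h ∈ C)
    (μ : Measure (X × Bool)) [IsProbabilityMeasure μ] (ε : ℝ)
    (hε : ε = (16 / (n : ℝ)) * ((d : ℝ) * (T : ℝ) * Real.log (2 * n) + Real.log (8 / δ))) :
    1 - δ ≤ ((Measure.pi fun _ : Fin n => μ)
      {ω : Fin n → X × Bool | ∀ c : Fin T → X → Bool, (∀ i, c i ∈ C) →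
        (μ {p : X × Bool | h p.1 ≠ p.2 ∧ p.1 ∈ {a : X | ∀ j, c j a = h a}}).toReal ≤
          max (2 * ((Set.ncard {i : Fin n |
              (ω i).1 ∈ {a : X | ∀ j, c j a = h a} ∧ h (ω i).1 ≠ (ω i).2} : ℝ) / n))
            ε}).toReal := by

  classical
  let ι := {c : Fin T → X → Bool // ∀ i, c i ∈ C}
  let F : ι → Set (X × Bool) := fun c => {p | h p.1 ≠ p.2 ∧ p.1 ∈ {a : X | ∀ j, c.1 j a = h a}}
  have hn' : (0:ℝ) < n := by exact_mod_cast hn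
  have hK : ∀ P : Finset (X × Bool), P.card ≤ 2 * n → ∃ S : Finset ι,
      S.card ≤ ((2 * n) ^ d) ^ T ∧ ∀ c, ∃ c' ∈ S, ∀ z ∈ P, (z ∈ F c' ↔ z ∈ F c) := by
    intro P hP
    obtain ⟨S, hS, hSC, hS'⟩ := traces C d hd hC (2 * n) (by omega) (P.image Prod.fst)
      (Finset.card_image_le.trans hP)
    refine ⟨(Fintype.piFinset (fun _ : Fin T => S)).subtype _, ?_, ?_⟩
    · rw [Finset.card_subtype]
      refine (Finset.card_filter_le _ _).trans ?_
      rw [Fintype.card_piFinset]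
      simp only [Finset.prod_const, Finset.card_univ, Fintype.card_fin]
      gcongr
    · intro c
      choose c' hc' hcc using fun i => hS' (c.1 i) (c.2 i)
      refine ⟨⟨c', fun i => hSC _ (hc' i)⟩, ?_, ?_⟩
      · exact Finset.mem_subtype.2 (Fintype.mem_piFinset.2 hc')
      · intro z hz
        have : ∀ i, c' i z.1 = c.1 i z.1 := fun i => hcc i _ (Finset.mem_image_of_mem _ hz)
        simp [F, this]
  have hcore := core μ n _ F hK (Real.exp (n * ε / 16))
  set B := {ω : Fin n → X × Bool | ∃ c, Real.exp (n * ε / 16) ≤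
    (1 + (μ (F c)).toReal / 3) ^ n * (2/3) ^ (Set.ncard {i | ω i ∈ F c})} with hB
  have hexp : Real.exp (n * ε / 16) = ((2 * n : ℝ) ^ d) ^ T * (8 / δ) := by
    have e : n * ε / 16 = ((d * T : ℕ) : ℝ) * Real.log (2 * n) + Real.log (8 / δ) := by
      rw [hε]; push_cast; field_simp
    rw [e, Real.exp_add, Real.exp_log (by positivity), Real.exp_nat_mul,
      Real.exp_log (by positivity), pow_mul]
  have hBr : ((Measure.pi fun _ : Fin n => μ) B).toReal ≤ δ := by
    have h1 := ENNReal.toReal_mono (ENNReal.natCast_ne_top _) hcore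
    rw [ENNReal.toReal_mul, ENNReal.toReal_ofReal (Real.exp_pos _).le, hexp] at h1
    simp only [ENNReal.toReal_natCast] at h1
    push_cast at h1
    have hq : (0:ℝ) < ((2 * n : ℝ) ^ d) ^ T := by positivity
    have h2 : 8 / δ * ((Measure.pi fun _ : Fin n => μ) B).toReal ≤ 1 := by
      have : ((2 * n : ℝ) ^ d) ^ T * (8 / δ * ((Measure.pi fun _ : Fin n => μ) B).toReal)
        ≤ ((2 * n : ℝ) ^ d) ^ T * 1 := by linarith
      exact le_of_mul_le_mul_left this hq
    rw [div_mul_eq_mul_div, div_le_one hδ0] at h2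
    have : 0 ≤ ((Measure.pi fun _ : Fin n => μ) B).toReal := ENNReal.toReal_nonneg
    linarith
  have hBm : MeasurableSet B := (Set.to_countable B).measurableSet
  have hsub : Bᶜ ⊆ {ω : Fin n → X × Bool | ∀ c : Fin T → X → Bool, (∀ i, c i ∈ C) →
        (μ {p : X × Bool | h p.1 ≠ p.2 ∧ p.1 ∈ {a : X | ∀ j, c j a = h a}}).toReal ≤
          max (2 * ((Set.ncard {i : Fin n |
              (ω i).1 ∈ {a : X | ∀ j, c j a = h a} ∧ h (ω i).1 ≠ (ω i).2} : ℝ) / n))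
            ε} := by
    intro ω hω c hc
    by_contra hcon
    rw [not_le, max_lt_iff] at hcon
    apply hω
    refine ⟨⟨c, hc⟩, ?_⟩
    have e : {i : Fin n | ω i ∈ F ⟨c, hc⟩} = {i : Fin n |
              (ω i).1 ∈ {a : X | ∀ j, c j a = h a} ∧ h (ω i).1 ≠ (ω i).2} := by
      ext i; exact and_comm
    rw [e]
    refine numeric n _ _ ε ENNReal.toReal_nonneg ?_ hcon.2 hcon.1 hn
    exact measureReal_le_one
  have h3 : ((Measure.pi fun _ : Fin n => μ) Bᶜ).toReal
      = 1 - ((Measure.pi fun _ : Fin n => μ) B).toReal := probReal_compl_eq_one_sub hBm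
  have h4 := ENNReal.toReal_mono (measure_ne_top (Measure.pi fun _ : Fin n => μ) _)
    (measure_mono (μ := Measure.pi fun _ : Fin n => μ) hsub)
  linarith
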